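/- Let μ be an ergodic translation-invariant Gibbs measure for the 1-2 model on the hexagonal lattice ℍ (with any weights a, b, c > 0), let τ₀ ∈ {001, 010, 011, 100, 101, 110} be any local configuration type, and let 𝒩_{τ₀}(ω) denote the number of infinite τ₀-clusters of ω. Then for every integer k with 1 < k < ∞, μ({ω : 𝒩_{τ₀}(ω) = k}) = 0. -/

import Mathlib

open MeasureTheory

/-- Vertices of the hexagonal lattice: `(x, y, t)` with `t = true` the "upper" vertex. -/
abbrev HexV : Type := ℤ × ℤ × Bool

/-- Edges of the hexagonal lattice: `(x, y, k)` with `k = 0` the a-type (horizontal) edge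
joining `(x,y,1)` to `(x,y,0)`, `k = 1` the b-type edge joining `(x,y,1)` to `(x+1,y,0)`,
`k = 2` the c-type edge joining `(x,y,1)` to `(x,y+1,0)`. -/
abbrev HexE : Type := ℤ × ℤ × Fin 3

/-- A configuration assigns present/absent to each edge. -/
abbrev Config : Type := HexE → Bool

def end1 (e : HexE) : HexV := (e.1, e.2.1, true)

def end2 (e : HexE) : HexV :=
  if e.2.2 = 0 then (e.1, e.2.1, false)
  else if e.2.2 = 1 then (e.1 + 1, e.2.1, false)
  else (e.1, e.2.1 + 1, false)

/-- The edges incident to a vertex, indexed so that index `0` is the a-type (horizontal)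
edge, index `1` the b-type edge, index `2` the c-type edge. -/
def edgesAt (v : HexV) : Fin 3 → HexE := fun i =>
  if v.2.2 then (v.1, v.2.1, i)
  else if i = 0 then (v.1, v.2.1, 0)
  else if i = 1 then (v.1 - 1, v.2.1, 1)
  else (v.1, v.2.1 - 1, 2)

/-- Local configuration of `ω` at `v`: digit `0` (rightmost) is the a-type edge,
digit `1` the b-type edge, digit `2` (leftmost) the c-type edge. -/
def localConf (ω : Config) (v : HexV) : Fin 3 → Bool := fun i => ω (edgesAt v i)

/-- A 1-2 model configuration: every vertex is incident to one or two present edges. -/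
def IsConfig (ω : Config) : Prop :=
  ∀ v : HexV,
    1 ≤ (Finset.univ.filter fun i : Fin 3 => localConf ω v i = true).card ∧
    (Finset.univ.filter fun i : Fin 3 => localConf ω v i = true).card ≤ 2

/-- The local configuration type `{001}` : only the a-type (horizontal) edge is present. -/
def conf001 : Fin 3 → Bool := ![true, false, false]

/-- The six admissible local configuration types `{001},…,{110}`. -/
def validConf (τ : Fin 3 → Bool) : Prop :=
  τ ≠ ![false, false, false] ∧ τ ≠ ![true, true, true]

/-- Vertex weight: `w(001)=w(110)=a`, `w(010)=w(101)=b`, `w(011)=w(100)=c`. -/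
def weight (a b c : ℝ) (f : Fin 3 → Bool) : ℝ :=
  match f 2, f 1, f 0 with
  | false, false, true  => a
  | true,  true,  false => a
  | false, true,  false => b
  | true,  false, true  => b
  | false, true,  true  => c
  | true,  false, false => c
  | false, false, false => 0
  | true,  true,  true  => 0

/-- Adjacency in the hexagonal lattice. -/
def HexAdj (v w : HexV) : Prop :=
  v ≠ w ∧ ∃ e : HexE, (v = end1 e ∨ v = end2 e) ∧ (w = end1 e ∨ w = end2 e)

/-- Adjacency restricted to a vertex set `S`. -/
def adjIn (S : Set HexV) (v w : HexV) : Prop := HexAdj v w ∧ v ∈ S ∧ w ∈ S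

/-- The connected component of `v` in the subgraph induced on `S`. -/
def compOf (S : Set HexV) (v : HexV) : Set HexV := {w | Relation.ReflTransGen (adjIn S) v w}

/-- `C` is a connected component of the subgraph induced on `S`. -/
def IsCompOf (S : Set HexV) (C : Set HexV) : Prop := ∃ v ∈ S, C = compOf S v

/-- Vertices whose local configuration equals `τ`. -/
def confSet (ω : Config) (τ : Fin 3 → Bool) : Set HexV := {v | localConf ω v = τ}

/-- A `τ`-cluster of `ω`. -/
def IsCluster (ω : Config) (τ : Fin 3 → Bool) (C : Set HexV) : Prop :=
  IsCompOf (confSet ω τ) C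

/-- The number of infinite `τ`-clusters of `ω`, as an extended natural number. -/
noncomputable def numInfClusters (ω : Config) (τ : Fin 3 → Bool) : ℕ∞ :=
  {C : Set HexV | IsCluster ω τ C ∧ C.Infinite}.encard

def endsFinset (e : HexE) : Finset HexV := {end1 e, end2 e}

/-- Vertices incident to an edge of `F`. -/
def verts (F : Finset HexE) : Finset HexV := F.biUnion endsFinset

/-- Edges sharing an endpoint with an edge of `F`. -/
def edgeNbhd (F : Finset HexE) : Set HexE :=
  {e' | ∃ e ∈ F,
    end1 e = end1 e' ∨ end1 e = end2 e' ∨ end2 e = end1 e' ∨ end2 e = end2 e'}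

/-- Cylinder event: configurations agreeing with `σ` on `S`. -/
def cyl (S : Set HexE) (σ : Config) : Set Config := {ω | ∀ e ∈ S, ω e = σ e}

/-- A Gibbs measure for the 1-2 model with weights `a`, `b`, `c`. -/
def IsGibbs (a b c : ℝ) (μ : Measure Config) : Prop :=
  IsProbabilityMeasure μ ∧ μ {ω | IsConfig ω} = 1 ∧
  ∀ F : Finset HexE, ∀ σ τ : Config, IsConfig σ → IsConfig τ →
    (∀ e ∉ F, σ e = τ e) →
    μ (cyl (↑F ∪ edgeNbhd F) σ) *
        ENNReal.ofReal (∏ v ∈ verts F, weight a b c (localConf τ v)) =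
      μ (cyl (↑F ∪ edgeNbhd F) τ) *
        ENNReal.ofReal (∏ v ∈ verts F, weight a b c (localConf σ v))

/-- Translation of edges by `g ∈ ℤ²`. -/
def shiftE (g : ℤ × ℤ) (e : HexE) : HexE := (e.1 + g.1, e.2.1 + g.2, e.2.2)

/-- Induced translation action on configurations. -/
def shiftConfig (g : ℤ × ℤ) (ω : Config) : Config := fun e => ω (shiftE g e)

/-- Translation invariance of a measure on configurations. -/
def TransInvariant (μ : Measure Config) : Prop :=
  ∀ g : ℤ × ℤ, μ.map (shiftConfig g) = μ

/-- Ergodicity: every translation-invariant measurable event has measure `0` or `1`. -/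
def IsErgodicTI (μ : Measure Config) : Prop :=
  ∀ A : Set Config, MeasurableSet A → (∀ g, shiftConfig g ⁻¹' A = A) → μ A = 0 ∨ μ A = 1

/-- The box `B_n(i,j)`. -/
def box (n : ℕ) (i j : ℤ) : Set HexV :=
  {v | |v.1 - i| ≤ (n : ℤ) ∧ |v.2.1 - j| ≤ (n : ℤ)}

/-- Vertices outside `B` adjacent to a vertex of `B`. -/
def outerBoundary (B : Set HexV) : Set HexV := {v | v ∉ B ∧ ∃ w ∈ B, HexAdj v w}

/-- `B_N(i,j)` is an encounter box for `ω` with respect to the infinite `{001}`-cluster `C`. -/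
def IsEncounterBoxWrt (ω : Config) (N : ℕ) (i j : ℤ) (C : Set HexV) : Prop :=
  IsCluster ω conf001 C ∧ C.Infinite ∧ box N i j ⊆ C ∧
  (∀ D, IsCompOf (C \ box (N + 2) i j) D → D.Infinite) ∧
  {D : Set HexV | IsCompOf (C \ box (N + 2) i j) D ∧ D.Infinite}.encard = 3

/-- `B_N(i,j)` is an encounter box for `ω`. -/
def IsEncounterBox (ω : Config) (N : ℕ) (i j : ℤ) : Prop :=
  ∃ C : Set HexV, IsEncounterBoxWrt ω N i j C

/-- A 3-partition of `Y`: an unordered triple of pairwise disjoint nonempty sets with union `Y`. -/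
def IsThreePartition {α : Type*} (Y : Set α) (P : Set (Set α)) : Prop :=
  ∃ P₁ P₂ P₃ : Set α, P = {P₁, P₂, P₃} ∧
    P₁.Nonempty ∧ P₂.Nonempty ∧ P₃.Nonempty ∧
    Disjoint P₁ P₂ ∧ Disjoint P₁ P₃ ∧ Disjoint P₂ P₃ ∧
    P₁ ∪ P₂ ∪ P₃ = Y

/-- Two 3-partitions are compatible if their parts can be ordered so that `Q₂ ∪ Q₃ ⊆ P₁`. -/
def CompatiblePartitions {α : Type*} (P Q : Set (Set α)) : Prop :=
  ∃ P₁ ∈ P, ∃ Q₁ ∈ Q, ∀ R ∈ Q, R ≠ Q₁ → R ⊆ P₁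

/-!
Finite energy: almost surely, every 1-2 model configuration obtained by changing finitely many edges
still satisfies any property of full probability. By ergodicity the number of infinite
`τ₀`-clusters is almost surely constant. If the constant were a finite `k > 1`, choose a lattice
path joining two infinite clusters and switch the edges near it to their digits in `τ₀`, one at a
time and as long as every vertex keeps one or two present edges. When no further switch is possible
every vertex of the path has type `τ₀`, because a surviving disagreement would propagate around a
hexagon to a contradiction, and no vertex of type `τ₀` has been lost. The two clusters are now
joined, so a finite change has lowered the count below `k`.
-/

open scoped ENNReal NNReal

/-! ### Infinite components of graphs -/

section InfiniteComponents

variable {V W : Type*}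

/-- The infinite connected components of `G`, whose number is compared before and after a finite
modification of `G`. -/
def infiniteComponents (G : SimpleGraph V) : Set G.ConnectedComponent := {C | C.supp.Infinite}

theorem encard_infiniteComponents_congr {G : SimpleGraph V} {H : SimpleGraph W} (φ : G ≃g H) :
    (infiniteComponents G).encard = (infiniteComponents H).encard := by
  refine Set.encard_congr (φ.connectedComponentEquiv.subtypeEquiv fun C => ?_)
  simp only [infiniteComponents, Set.mem_ofPred_eq, ← Set.infinite_coe_iff]
  exact (SimpleGraph.ConnectedComponent.isoEquivSupp φ C).infinite_iff

variable {G H : SimpleGraph V}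

theorem reachable_or_exists_mem_support_sdiff_reachable {v w : V} (p : G.Walk v w) :
    H.Reachable v w ∨ ∃ u ∈ (G \ H).support, H.Reachable u w := by
  induction p with
  | nil => exact .inl .rfl
  | @cons v u w hadj _ ih =>
    by_cases hH : H.Adj v u
    · exact ih.imp_left hH.reachable.trans
    · exact .inr (ih.elim (fun h => ⟨u, ⟨v, hadj.symm, fun h' => hH h'.symm⟩, h⟩) id)

theorem finite_setOf_map_eq (hle : H ≤ G) (hfin : (G \ H).support.Finite)
    (C : G.ConnectedComponent) :
    {D : H.ConnectedComponent | D.map (.ofLE hle) = C}.Finite := by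
  obtain ⟨v, rfl⟩ := C.exists_rep
  refine ((hfin.insert v).image H.connectedComponentMk).subset fun D hD => ?_
  obtain ⟨w, rfl⟩ := D.exists_rep
  obtain ⟨p⟩ := (SimpleGraph.ConnectedComponent.exact hD).symm
  obtain h | ⟨u, hu, h⟩ := reachable_or_exists_mem_support_sdiff_reachable (H := H) p
  · exact ⟨v, .inl rfl, SimpleGraph.ConnectedComponent.sound h⟩
  · exact ⟨u, .inr hu, SimpleGraph.ConnectedComponent.sound h⟩

theorem image_map_infiniteComponents (hle : H ≤ G) (hfin : (G \ H).support.Finite) :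
    SimpleGraph.ConnectedComponent.map (.ofLE hle) '' infiniteComponents H =
      infiniteComponents G := by
  ext C
  constructor
  · rintro ⟨D, hD, rfl⟩
    refine hD.mono fun v hv => ?_
    rw [SimpleGraph.ConnectedComponent.mem_supp_iff] at hv ⊢
    rw [← hv, SimpleGraph.ConnectedComponent.map_mk, SimpleGraph.Hom.ofLE_apply]
  · intro hC
    by_contra hnone
    refine hC (((finite_setOf_map_eq hle hfin C).biUnion fun D hD => ?_).subset fun v hv =>
      Set.mem_biUnion (x := H.connectedComponentMk v) hv
        SimpleGraph.ConnectedComponent.connectedComponentMk_mem)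
    exact Set.not_infinite.1 fun hDinf => hnone ⟨D, hDinf, hD⟩

theorem encard_infiniteComponents_lt (hle : H ≤ G)
    (hdiff : (G \ H).support.Finite) (hfin : (infiniteComponents H).Finite)
    {C D : H.ConnectedComponent} (hC : C ∈ infiniteComponents H) (hD : D ∈ infiniteComponents H)
    (hne : C ≠ D) (hmerge : C.map (.ofLE hle) = D.map (.ofLE hle)) :
    (infiniteComponents G).encard < (infiniteComponents H).encard := by
  rw [← image_map_infiniteComponents hle hdiff]
  refine lt_of_le_of_ne (Set.encard_image_le _ _) fun heq => hne ?_
  exact hfin.injOn_of_encard_image_eq heq hC hD hmerge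

theorem encard_infiniteComponents_eq_encard_minimal [Encodable V] (G : SimpleGraph V) :
    (infiniteComponents G).encard =
      {v : V | {w | G.Reachable v w}.Infinite ∧
        ∀ w, G.Reachable v w → Encodable.encode v ≤ Encodable.encode w}.encard := by
  have hsupp (v : V) : {w | G.Reachable v w} = (G.connectedComponentMk v).supp :=
    Set.ext fun w => ⟨fun h => SimpleGraph.ConnectedComponent.sound h.symm,
      fun h => (SimpleGraph.ConnectedComponent.exact h).symm⟩
  simp only [hsupp]
  set M := {v : V | (G.connectedComponentMk v).supp.Infinite ∧
    ∀ w, G.Reachable v w → Encodable.encode v ≤ Encodable.encode w}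
  have hinj : M.InjOn G.connectedComponentMk := fun v hv w hw h => by
    have hvw := SimpleGraph.ConnectedComponent.exact h
    exact Encodable.encode_injective ((hv.2 w hvw).antisymm (hw.2 v hvw.symm))
  have himage : G.connectedComponentMk '' M = infiniteComponents G := by
    refine (Set.image_subset_iff.2 fun v hv => hv.1).antisymm fun C hC => ?_
    obtain ⟨v, rfl, hmin⟩ :=
      exists_minimalFor_of_wellFoundedLT (G.connectedComponentMk · = C) Encodable.encode
        C.exists_rep
    refine ⟨v, ⟨hC, fun w hw => ?_⟩, rfl⟩
    exact (le_total _ _).elim id (hmin (SimpleGraph.ConnectedComponent.sound hw.symm))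
  rw [← himage, hinj.encard_image]

end InfiniteComponents

section Measurability

variable {Ω V : Type*} [MeasurableSpace Ω]

theorem measurable_isChain {r : Ω → V → V → Prop} (hr : ∀ v w, Measurable fun ω => r ω v w)
    (l : List V) : Measurable fun ω => l.IsChain (r ω) := by
  induction l using List.twoStepInduction with
  | nil => simp
  | singleton => simp
  | cons_cons v w l _ ih => simpa only [List.isChain_cons_cons] using (hr v w).and (ih w)

variable [Countable V] {G : Ω → SimpleGraph V}

theorem measurable_reachable (hG : ∀ v w, Measurable fun ω => (G ω).Adj v w) (v w : V) :
    Measurable fun ω => (G ω).Reachable v w := by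
  have hchain (ω : Ω) : (G ω).Reachable v w ↔
      ∃ l : List V, (v :: l).IsChain (G ω).Adj ∧ (v :: l).getLast (by simp) = w := by
    rw [SimpleGraph.reachable_iff_reflTransGen]
    exact ⟨List.exists_isChain_cons_of_relationReflTransGen,
      fun ⟨l, hl, hw⟩ => List.relationReflTransGen_of_exists_isChain_cons l hl hw⟩
  simp only [hchain]
  exact .exists fun l => (measurable_isChain hG _).and measurable_const

theorem measurable_encard_infiniteComponents (hG : ∀ v w, Measurable fun ω => (G ω).Adj v w) :
    Measurable fun ω => (infiniteComponents (G ω)).encard := by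
  have := Encodable.ofCountable V
  simp only [encard_infiniteComponents_eq_encard_minimal]
  refine measurable_encard.comp (measurable_set_iff.2 fun v => .and ?_ ?_)
  · have hcomp : Measurable fun ω => {w | (G ω).Reachable v w} :=
      measurable_set_iff.2 fun w => measurable_reachable hG v w
    simp only [← Set.encard_eq_top_iff]
    exact measurableSet_setOfPred.1 ((measurable_encard.comp hcomp) (measurableSet_singleton ⊤))
  · exact .forall fun w => (measurable_reachable hG v w).imp measurable_const

end Measurability

/-! ### Clusters in the hexagonal lattice -/

section Lattice

/-- The other endpoint of the type-`m` edge at `v`. -/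
def neighbor (m : Fin 3) (v : HexV) : HexV :=
  if v.2.2 then
    if m = 0 then (v.1, v.2.1, false)
    else if m = 1 then (v.1 + 1, v.2.1, false)
    else (v.1, v.2.1 + 1, false)
  else
    if m = 0 then (v.1, v.2.1, true)
    else if m = 1 then (v.1 - 1, v.2.1, true)
    else (v.1, v.2.1 - 1, true)

theorem neighbor_hexagon {i j k : Fin 3} (hij : i ≠ j) (hik : i ≠ k) (hjk : j ≠ k) (v : HexV) :
    neighbor k (neighbor i (neighbor j v)) = neighbor j (neighbor i (neighbor k v)) := by
  obtain ⟨x, y, t⟩ := v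
  fin_cases i <;> fin_cases j <;> fin_cases k <;> simp at hij hik hjk <;>
    cases t <;> simp [neighbor]

theorem edgesAt_neighbor (m : Fin 3) (v : HexV) : edgesAt (neighbor m v) m = edgesAt v m := by
  obtain ⟨x, y, t⟩ := v
  fin_cases m <;> cases t <;> simp [neighbor, edgesAt]

theorem edgesAt_snd_snd (v : HexV) (m : Fin 3) : (edgesAt v m).2.2 = m := by
  obtain ⟨x, y, t⟩ := v
  fin_cases m <;> cases t <;> simp [edgesAt]

theorem edgesAt_eq_edgesAt_iff {u v : HexV} {l m : Fin 3} :
    edgesAt u l = edgesAt v m ↔ l = m ∧ (u = v ∨ u = neighbor m v) := by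
  constructor
  · intro h
    obtain rfl : l = m := by rw [← edgesAt_snd_snd u l, h, edgesAt_snd_snd]
    refine ⟨rfl, ?_⟩
    obtain ⟨x, y, t⟩ := v
    obtain ⟨x', y', t'⟩ := u
    fin_cases l <;> cases t <;> cases t' <;> simp [edgesAt, neighbor] at h ⊢ <;> omega
  · rintro ⟨rfl, rfl | rfl⟩
    · rfl
    · exact edgesAt_neighbor l v

theorem mem_endsFinset_iff {v : HexV} {e : HexE} : v ∈ endsFinset e ↔ ∃ m, edgesAt v m = e := by
  obtain ⟨x, y, t⟩ := v
  obtain ⟨x', y', k⟩ := e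
  constructor
  · intro h
    refine ⟨k, ?_⟩
    fin_cases k <;> cases t <;> simp_all [endsFinset, end1, end2, edgesAt]
  · rintro ⟨m, h⟩
    fin_cases m <;> cases t <;> simp_all [endsFinset, end1, end2, edgesAt] <;> grind

theorem hexAdj_iff {v w : HexV} : HexAdj v w ↔ ∃ m, w = neighbor m v := by
  constructor
  · rintro ⟨hne, e, hv, hw⟩
    obtain ⟨l, rfl⟩ := mem_endsFinset_iff.1 (show v ∈ endsFinset e by simpa [endsFinset] using hv)
    obtain ⟨m, h⟩ := mem_endsFinset_iff.1
      (show w ∈ endsFinset (edgesAt v l) by simpa [endsFinset] using hw)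
    exact ⟨l, (edgesAt_eq_edgesAt_iff.1 h).2.resolve_left hne.symm⟩
  · rintro ⟨m, rfl⟩
    have hend (u : HexV) (hu : edgesAt u m = edgesAt v m) :
        u = end1 (edgesAt v m) ∨ u = end2 (edgesAt v m) := by
      simpa [endsFinset] using mem_endsFinset_iff.2 ⟨m, hu⟩
    refine ⟨?_, edgesAt v m, hend _ rfl, hend _ (edgesAt_neighbor m v)⟩
    obtain ⟨x, y, t⟩ := v
    cases t <;> simp [neighbor] <;> grind

end Lattice

section Clusters

/-- The hexagonal lattice. -/
def hexGraph : SimpleGraph HexV where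
  Adj := HexAdj
  symm := ⟨fun _ _ ⟨hne, e, hv, hw⟩ => ⟨hne.symm, e, hw, hv⟩⟩
  loopless := ⟨fun _ h => h.1 rfl⟩

theorem hexGraph_adj_neighbor (m : Fin 3) (v : HexV) : hexGraph.Adj v (neighbor m v) :=
  hexAdj_iff.2 ⟨m, rfl⟩

theorem reachable_of_forall_reachable_succ {V : Type*} {G : SimpleGraph V} {f : ℤ → V}
    (h : ∀ n, G.Reachable (f n) (f (n + 1))) (m n : ℤ) : G.Reachable (f m) (f n) := by
  have : IsPreorder V G.Reachable := { refl _ := .rfl, trans _ _ _ := .trans }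
  have hle {m n : ℤ} (hmn : m ≤ n) : G.Reachable (f m) (f n) :=
    Int.rel_of_forall_rel_succ_of_le G.Reachable h hmn
  exact (le_total m n).elim hle fun hnm => (hle hnm).symm

theorem hexGraph_preconnected : hexGraph.Preconnected := by
  have htrue (v : HexV) : hexGraph.Reachable v (v.1, v.2.1, true) := by
    obtain ⟨x, y, t⟩ := v
    cases t
    · exact (hexGraph_adj_neighbor 0 _).reachable
    · exact .rfl
  have hstep (v : HexV) (m : Fin 3) : hexGraph.Reachable v (neighbor 0 (neighbor m v)) :=
    (hexGraph_adj_neighbor m v).reachable.trans (hexGraph_adj_neighbor 0 _).reachable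
  have hx (y x x' : ℤ) : hexGraph.Reachable (x, y, true) (x', y, true) :=
    reachable_of_forall_reachable_succ (fun n => hstep (n, y, true) 1) x x'
  have hy (x y y' : ℤ) : hexGraph.Reachable (x, y, true) (x, y', true) :=
    reachable_of_forall_reachable_succ (fun n => hstep (x, n, true) 2) y y'
  exact fun v w => (htrue v).trans <| (hx _ _ _).trans <| (hy _ _ _).trans (htrue w).symm

/-- The subgraph of the hexagonal lattice induced on `S`, kept on the vertex set `HexV`: the
vertices outside `S` are isolated and so contribute no infinite component. -/
def siteGraph (S : Set HexV) : SimpleGraph HexV where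
  Adj := adjIn S
  symm := ⟨fun _ _ ⟨hadj, hv, hw⟩ => ⟨hexGraph.adj_symm hadj, hw, hv⟩⟩
  loopless := ⟨fun _ h => h.1.1 rfl⟩

theorem siteGraph_mono {S T : Set HexV} (h : S ⊆ T) : siteGraph S ≤ siteGraph T :=
  fun _ _ ⟨hadj, hv, hw⟩ => ⟨hadj, h hv, h hw⟩

theorem support_sdiff_siteGraph_finite {S T : Set HexV} (h : (T \ S).Finite) :
    (siteGraph T \ siteGraph S).support.Finite := by
  refine (h.union (h.biUnion fun v _ => Set.finite_range (neighbor · v))).subset ?_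
  rintro v ⟨w, ⟨hadj, hv, hw⟩, hS⟩
  by_cases hvS : v ∈ S
  · have hwS : w ∉ S := fun hwS => hS ⟨hadj, hvS, hwS⟩
    obtain ⟨m, rfl⟩ := hexAdj_iff.1 (hexGraph.adj_symm hadj)
    exact .inr (Set.mem_biUnion ⟨hw, hwS⟩ ⟨m, rfl⟩)
  · exact .inl ⟨hv, hvS⟩

theorem siteGraph_reachable_of_support_subset {S : Set HexV} {v w : HexV} (p : hexGraph.Walk v w)
    (h : ∀ u ∈ p.support, u ∈ S) : (siteGraph S).Reachable v w := by
  induction p with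
  | nil => rfl
  | cons hadj p ih =>
    simp only [SimpleGraph.Walk.support_cons, List.forall_mem_cons] at h
    exact .trans (SimpleGraph.Adj.reachable ⟨hadj, h.1, h.2 _ p.start_mem_support⟩) (ih h.2)

theorem compOf_eq_supp (S : Set HexV) (v : HexV) :
    compOf S v = ((siteGraph S).connectedComponentMk v).supp := by
  ext w
  rw [SimpleGraph.ConnectedComponent.mem_supp_iff, SimpleGraph.ConnectedComponent.eq,
    SimpleGraph.reachable_comm, SimpleGraph.reachable_iff_reflTransGen]
  rfl

theorem compOf_eq_singleton {S : Set HexV} {v : HexV} (hv : v ∉ S) : compOf S v = {v} :=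
  Set.Subset.antisymm
    (fun _ h => h.cases_head.elim Eq.symm fun ⟨_, hadj, _⟩ => absurd hadj.2.1 hv)
    (Set.singleton_subset_iff.2 .refl)

theorem numInfClusters_eq_encard_infiniteComponents (ω : Config) (τ : Fin 3 → Bool) :
    numInfClusters ω τ = (infiniteComponents (siteGraph (confSet ω τ))).encard := by
  rw [← (SimpleGraph.ConnectedComponent.supp_injective.injOn).encard_image, numInfClusters]
  congr 1
  ext C
  constructor
  · rintro ⟨⟨v, -, rfl⟩, hinf⟩
    rw [compOf_eq_supp] at hinf ⊢
    exact ⟨_, hinf, rfl⟩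
  · rintro ⟨D, hinf, rfl⟩
    obtain ⟨v, rfl⟩ := D.exists_rep
    refine ⟨⟨v, by_contra fun hv => ?_, (compOf_eq_supp _ v).symm⟩, hinf⟩
    have hfin : (compOf (confSet ω τ) v).Finite :=
      (compOf_eq_singleton hv).symm ▸ Set.finite_singleton v
    exact hinf (compOf_eq_supp _ v ▸ hfin)

end Clusters

section Symmetry

theorem measurable_localConf (v : HexV) : Measurable (localConf · v) :=
  measurable_pi_lambda _ fun i => measurable_pi_apply (edgesAt v i)

theorem measurable_numInfClusters (τ : Fin 3 → Bool) : Measurable (numInfClusters · τ) := by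
  have hmem (v : HexV) : Measurable fun ω => v ∈ confSet ω τ :=
    measurableSet_setOfPred.1 (measurable_localConf v (measurableSet_singleton τ))
  simp only [numInfClusters_eq_encard_infiniteComponents]
  exact measurable_encard_infiniteComponents fun v w =>
    measurable_const.and ((hmem v).and (hmem w))

/-- Translation of vertices by `g ∈ ℤ²`. -/
def shiftV (g : ℤ × ℤ) : HexV ≃ HexV :=
  (Equiv.addRight g.1).prodCongr ((Equiv.addRight g.2).prodCongr (Equiv.refl Bool))

theorem shiftV_neighbor (g : ℤ × ℤ) (m : Fin 3) (v : HexV) :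
    shiftV g (neighbor m v) = neighbor m (shiftV g v) := by
  obtain ⟨x, y, t⟩ := v
  fin_cases m <;> cases t <;> simp [neighbor, shiftV] <;> ring

theorem shiftE_edgesAt (g : ℤ × ℤ) (m : Fin 3) (v : HexV) :
    shiftE g (edgesAt v m) = edgesAt (shiftV g v) m := by
  obtain ⟨x, y, t⟩ := v
  fin_cases m <;> cases t <;> simp [edgesAt, shiftV, shiftE] <;> ring

theorem localConf_shiftConfig (g : ℤ × ℤ) (ω : Config) (v : HexV) :
    localConf (shiftConfig g ω) v = localConf ω (shiftV g v) :=
  funext fun m => congrArg ω (shiftE_edgesAt g m v)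

theorem hexAdj_shiftV_iff (g : ℤ × ℤ) {v w : HexV} :
    HexAdj (shiftV g v) (shiftV g w) ↔ HexAdj v w := by
  simp only [hexAdj_iff, ← shiftV_neighbor, (shiftV g).injective.eq_iff]

theorem numInfClusters_shiftConfig (g : ℤ × ℤ) (ω : Config) (τ : Fin 3 → Bool) :
    numInfClusters (shiftConfig g ω) τ = numInfClusters ω τ := by
  simp only [numInfClusters_eq_encard_infiniteComponents]
  refine encard_infiniteComponents_congr ⟨shiftV g, fun {v w} => ?_⟩
  simp only [siteGraph, adjIn, confSet, Set.mem_ofPred_eq, localConf_shiftConfig,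
    hexAdj_shiftV_iff]

end Symmetry

/-! ### Forcing a local configuration type -/

section Locking

theorem validConf_iff {τ : Fin 3 → Bool} : validConf τ ↔ ∀ b, ∃ m, τ m ≠ b := by
  unfold validConf
  decide +revert

theorem isConfig_iff {ω : Config} : IsConfig ω ↔ ∀ v, validConf (localConf ω v) := by
  refine forall_congr' fun v => ?_
  generalize localConf ω v = τ
  unfold validConf
  decide +revert

theorem exists_ne_of_validConf {τ : Fin 3 → Bool} (hτ : validConf τ) :
    ∃ i j k, τ i ≠ τ j ∧ τ i ≠ τ k ∧ j ≠ k := by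
  unfold validConf at hτ
  decide +revert

theorem eq_or_eq_or_eq_of_ne {i j k : Fin 3} (hij : i ≠ j) (hik : i ≠ k) (hjk : j ≠ k)
    (m : Fin 3) : m = i ∨ m = j ∨ m = k := by
  decide +revert

theorem localConf_update (ω : Config) (v u : HexV) (m l : Fin 3) (b : Bool) :
    localConf (Function.update ω (edgesAt v m) b) u l =
      if l = m ∧ (u = v ∨ u = neighbor m v) then b else localConf ω u l := by
  simp only [localConf, Function.update_apply, edgesAt_eq_edgesAt_iff]

theorem localConf_neighbor (ω : Config) (v : HexV) (m : Fin 3) :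
    localConf ω (neighbor m v) m = localConf ω v m :=
  congrArg ω (edgesAt_neighbor m v)

theorem exists_forall_ne_of_not_isConfig_update {ω : Config} (hω : IsConfig ω) {v : HexV}
    {m : Fin 3} {b : Bool} (h : ¬ IsConfig (Function.update ω (edgesAt v m) b)) :
    ∃ u, (u = v ∨ u = neighbor m v) ∧ ∀ l ≠ m, localConf ω u l = b := by
  simp only [isConfig_iff, validConf_iff, localConf_update] at hω h
  push Not at h
  obtain ⟨u, b', hu⟩ := h
  by_cases huv : u = v ∨ u = neighbor m v
  · obtain rfl : b = b' := by simpa [huv] using hu m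
    exact ⟨u, huv, fun l hl => by simpa [hl] using hu l⟩
  · obtain ⟨l, hl⟩ := hω u b'
    exact absurd (by simpa [huv] using hu l) hl

/-- No edge at `v` on which the configuration `ω` disagrees with the local configuration type `τ`
can be switched to agree without leaving the set of 1-2 model configurations. -/
def IsLockedAt (τ : Fin 3 → Bool) (ω : Config) (v : HexV) : Prop :=
  ∀ m, localConf ω v m ≠ τ m → ¬ IsConfig (Function.update ω (edgesAt v m) (τ m))

/-- The ball of radius `n` around `v` in the graph distance of the hexagonal lattice. -/
def hexBall : ℕ → HexV → Finset HexV
  | 0, v => {v}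
  | n + 1, v => hexBall n v ∪ Finset.univ.biUnion fun m => hexBall n (neighbor m v)

theorem hexBall_subset_succ (n : ℕ) (v : HexV) : hexBall n v ⊆ hexBall (n + 1) v :=
  Finset.subset_union_left

theorem hexBall_neighbor_subset (n : ℕ) (m : Fin 3) (v : HexV) :
    hexBall n (neighbor m v) ⊆ hexBall (n + 1) v :=
  (Finset.subset_biUnion_of_mem (fun m => hexBall n (neighbor m v)) (Finset.mem_univ m)).trans
    Finset.subset_union_right

theorem self_mem_hexBall (n : ℕ) (v : HexV) : v ∈ hexBall n v := by
  induction n with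
  | zero => exact Finset.mem_singleton_self v
  | succ n ih => exact hexBall_subset_succ n v ih

variable {τ : Fin 3 → Bool} {ω : Config} {v : HexV} {i j k : Fin 3}

theorem IsLockedAt.exists_ne_of_majority_ne (hv : IsLockedAt τ ω v) (hω : IsConfig ω)
    (hij : τ i ≠ τ j) (hik : τ i ≠ τ k) (hjk : j ≠ k) (hj : localConf ω v j ≠ τ j) :
    ∃ u, (u = v ∨ u = neighbor j v) ∧ localConf ω u i ≠ τ i ∧ localConf ω u k = τ k := by
  obtain ⟨u, hu, h⟩ := exists_forall_ne_of_not_isConfig_update hω (hv j hj)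
  have hjk' : τ j = τ k := (Bool.eq_not.2 hij.symm).trans (Bool.eq_not.2 hik.symm).symm
  exact ⟨u, hu, h i (ne_of_apply_ne τ hij) ▸ hij.symm, (h k hjk.symm).trans hjk'⟩

theorem IsLockedAt.exists_ne_of_minority_ne (hv : IsLockedAt τ ω v) (hω : IsConfig ω)
    (hij : τ i ≠ τ j) (hik : τ i ≠ τ k) (hi : localConf ω v i ≠ τ i) :
    ∃ u, (u = v ∨ u = neighbor i v) ∧ localConf ω u j ≠ τ j ∧ localConf ω u k ≠ τ k := by
  obtain ⟨u, hu, h⟩ := exists_forall_ne_of_not_isConfig_update hω (hv i hi)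
  exact ⟨u, hu, h j (ne_of_apply_ne τ hij.symm) ▸ hij, h k (ne_of_apply_ne τ hik.symm) ▸ hik⟩

theorem majority_ne_of_locked_of_forall_ne (hω : IsConfig ω)
    (hv : ∀ u ∈ hexBall 1 v, IsLockedAt τ ω u)
    (hij : τ i ≠ τ j) (hik : τ i ≠ τ k) (hjk : j ≠ k) (hne : ∀ m, localConf ω v m ≠ τ m) :
    localConf ω (neighbor i (neighbor j v)) j ≠ τ j ∧
      localConf ω (neighbor i (neighbor j v)) k ≠ τ k := by
  obtain ⟨u, rfl | rfl, hi, hk⟩ :=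
    (hv v (self_mem_hexBall 1 v)).exists_ne_of_majority_ne hω hij hik hjk (hne j)
  · exact absurd hk (hne k)
  obtain ⟨w, rfl | rfl, hwj, hwk⟩ := (hv _ (hexBall_neighbor_subset 0 j v
    (self_mem_hexBall 0 _))).exists_ne_of_minority_ne hω hij hik hi
  · exact absurd hk hwk
  · exact ⟨hwj, hwk⟩

-- Going around a hexagon through `v` in both directions forces incompatible values of the
-- type-`j` edge at the opposite vertex.
theorem exists_eq_of_locked (hω : IsConfig ω) (hv : ∀ u ∈ hexBall 2 v, IsLockedAt τ ω u)
    (hij : τ i ≠ τ j) (hik : τ i ≠ τ k) (hjk : j ≠ k) : ∃ m, localConf ω v m = τ m := by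
  by_contra! hne
  have hv₁ : ∀ u ∈ hexBall 1 v, IsLockedAt τ ω u := fun u hu => hv u (hexBall_subset_succ 1 v hu)
  obtain ⟨hj, hk⟩ := majority_ne_of_locked_of_forall_ne hω hv₁ hij hik hjk hne
  obtain ⟨-, hj'⟩ := majority_ne_of_locked_of_forall_ne hω hv₁ hik hij hjk.symm hne
  have hmem : neighbor i (neighbor j v) ∈ hexBall 2 v :=
    hexBall_neighbor_subset 1 j v (hexBall_neighbor_subset 0 i _ (self_mem_hexBall 0 _))
  obtain ⟨u, rfl | rfl, -, hu⟩ :=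
    (hv _ hmem).exists_ne_of_majority_ne hω hik hij hjk.symm hk
  · exact hj hu
  · rw [neighbor_hexagon (ne_of_apply_ne τ hij) (ne_of_apply_ne τ hik) hjk,
      localConf_neighbor] at hu
    exact hj' hu

theorem minority_eq_of_locked (hω : IsConfig ω) (hv : ∀ u ∈ hexBall 3 v, IsLockedAt τ ω u)
    (hij : τ i ≠ τ j) (hik : τ i ≠ τ k) (hjk : j ≠ k) : localConf ω v i = τ i := by
  by_contra hi
  obtain ⟨u, hu, hj, hk⟩ :=
    (hv v (self_mem_hexBall 3 v)).exists_ne_of_minority_ne hω hij hik hi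
  have hball : hexBall 2 u ⊆ hexBall 3 v := by
    obtain rfl | rfl := hu
    exacts [hexBall_subset_succ 2 u, hexBall_neighbor_subset 2 i v]
  have hi' : localConf ω u i ≠ τ i := by
    obtain rfl | rfl := hu
    exacts [hi, by rwa [localConf_neighbor]]
  obtain ⟨m, hm⟩ := exists_eq_of_locked hω (fun w hw => hv w (hball hw)) hij hik hjk
  obtain rfl | rfl | rfl :=
    eq_or_eq_or_eq_of_ne (ne_of_apply_ne τ hij) (ne_of_apply_ne τ hik) hjk m
  exacts [hi' hm, hj hm, hk hm]

theorem localConf_eq_of_locked (hτ : validConf τ) (hω : IsConfig ω)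
    (hv : ∀ u ∈ hexBall 4 v, IsLockedAt τ ω u) : localConf ω v = τ := by
  obtain ⟨i, j, k, hij, hik, hjk⟩ := exists_ne_of_validConf hτ
  have hminority {u : HexV} (hu : hexBall 3 u ⊆ hexBall 4 v) : localConf ω u i = τ i :=
    minority_eq_of_locked hω (fun w hw => hv w (hu hw)) hij hik hjk
  have hmajority {j k : Fin 3} (hij : τ i ≠ τ j) (hik : τ i ≠ τ k) (hjk : j ≠ k) :
      localConf ω v j = τ j := by
    by_contra hj
    obtain ⟨u, rfl | rfl, hi, -⟩ :=
      (hv v (self_mem_hexBall 4 v)).exists_ne_of_majority_ne hω hij hik hjk hj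
    · exact hi (hminority (hexBall_subset_succ 3 u))
    · exact hi (hminority (hexBall_neighbor_subset 3 j v))
  funext m
  obtain rfl | rfl | rfl :=
    eq_or_eq_or_eq_of_ne (ne_of_apply_ne τ hij) (ne_of_apply_ne τ hik) hjk m
  exacts [hminority (hexBall_subset_succ 3 v), hmajority hij hik hjk, hmajority hik hij hjk.symm]

end Locking

section Merging

variable {τ : Fin 3 → Bool} {ω : Config}

-- Among the configurations obtained from `ω` by setting some edges of `F` to their digit in `τ`,
-- take one that disagrees with `τ` on the fewest edges of `F`.
theorem exists_isConfig_forall_not_isConfig_update (τ : Fin 3 → Bool) (hω : IsConfig ω)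
    (F : Finset HexE) :
    ∃ ω', IsConfig ω' ∧ (∀ e, ω' e = ω e ∨ e ∈ F ∧ ω' e = τ e.2.2) ∧
      ∀ e ∈ F, ω' e ≠ τ e.2.2 → ¬ IsConfig (Function.update ω' e (τ e.2.2)) := by
  obtain ⟨ω', ⟨hω', hF⟩, hmin⟩ := exists_minimalFor_of_wellFoundedLT
    (fun ω' : Config => IsConfig ω' ∧ ∀ e, ω' e = ω e ∨ e ∈ F ∧ ω' e = τ e.2.2)
    (fun ω' => {e ∈ F | ω' e ≠ τ e.2.2}) ⟨ω, hω, fun _ => .inl rfl⟩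
  refine ⟨ω', hω', hF, fun e he hne hupdate => ?_⟩
  have hagree : ∀ e', Function.update ω' e (τ e.2.2) e' = ω e' ∨
      e' ∈ F ∧ Function.update ω' e (τ e.2.2) e' = τ e'.2.2 := fun e' => by
    obtain rfl | h := eq_or_ne e' e
    · exact .inr ⟨he, Function.update_self ..⟩
    · simpa only [Function.update_of_ne h] using hF e'
  have hsubset : {e' ∈ F | Function.update ω' e (τ e.2.2) e' ≠ τ e'.2.2} ⊆
      {e' ∈ F | ω' e' ≠ τ e'.2.2} := fun e' he' => by
    obtain rfl | h := eq_or_ne e' e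
    · exact Finset.mem_filter.2 ⟨he, hne⟩
    · simpa only [Finset.mem_filter, Function.update_of_ne h] using he'
  have hmem := hmin ⟨hupdate, hagree⟩ hsubset (Finset.mem_filter.2 ⟨he, hne⟩)
  exact (Finset.mem_filter.1 hmem).2 (Function.update_self ..)

theorem exists_isConfig_subset_confSet (hτ : validConf τ) (hω : IsConfig ω) (B : Finset HexV) :
    ∃ ω', IsConfig ω' ∧ {e | ω' e ≠ ω e}.Finite ∧ confSet ω τ ⊆ confSet ω' τ ∧
      ↑B ⊆ confSet ω' τ := by
  let F := (B.biUnion (hexBall 4)).biUnion fun v => Finset.univ.image (edgesAt v)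
  obtain ⟨ω', hω', hF, hlocked⟩ := exists_isConfig_forall_not_isConfig_update τ hω F
  refine ⟨ω', hω', F.finite_toSet.subset fun e he => ((hF e).resolve_left he).1,
    fun v hv => funext fun m => ?_, fun v hv => ?_⟩
  · obtain h | ⟨-, h⟩ := hF (edgesAt v m)
    · exact h.trans (congrFun hv m)
    · rwa [edgesAt_snd_snd] at h
  · refine localConf_eq_of_locked hτ hω' fun u hu m hne => ?_
    have hmem : edgesAt u m ∈ F := Finset.mem_biUnion.2
      ⟨u, Finset.mem_biUnion.2 ⟨v, hv, hu⟩, Finset.mem_image_of_mem _ (Finset.mem_univ m)⟩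
    simpa only [edgesAt_snd_snd] using hlocked _ hmem (by rwa [edgesAt_snd_snd])

theorem confSet_sdiff_finite {ω' : Config} (h : {e | ω' e ≠ ω e}.Finite) (τ : Fin 3 → Bool) :
    (confSet ω' τ \ confSet ω τ).Finite := by
  refine (h.biUnion fun e _ => (endsFinset e).finite_toSet).subset fun v ⟨hv, hv'⟩ => ?_
  obtain ⟨m, hm⟩ := Function.ne_iff.1 hv'
  exact Set.mem_biUnion (x := edgesAt v m) (fun heq => hm (heq.symm.trans (congrFun hv m)))
    (mem_endsFinset_iff.2 ⟨m, rfl⟩)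

theorem exists_isConfig_numInfClusters_lt (hτ : validConf τ) (hω : IsConfig ω)
    (hone : 1 < numInfClusters ω τ) (htop : numInfClusters ω τ ≠ ⊤) :
    ∃ ω', IsConfig ω' ∧ {e | ω' e ≠ ω e}.Finite ∧ numInfClusters ω' τ < numInfClusters ω τ := by
  simp only [numInfClusters_eq_encard_infiniteComponents] at hone htop ⊢
  obtain ⟨C, D, hC, hD, hne⟩ := Set.one_lt_encard_iff.1 hone
  obtain ⟨v, rfl⟩ := C.exists_rep
  obtain ⟨w, rfl⟩ := D.exists_rep
  obtain ⟨p⟩ := hexGraph_preconnected v w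
  obtain ⟨ω', hω', hfin, hsub, hp⟩ := exists_isConfig_subset_confSet hτ hω p.support.toFinset
  have hreach : (siteGraph (confSet ω' τ)).Reachable v w :=
    siteGraph_reachable_of_support_subset p fun u hu => hp (List.mem_toFinset.2 hu)
  exact ⟨ω', hω', hfin, encard_infiniteComponents_lt (siteGraph_mono hsub)
    (support_sdiff_siteGraph_finite (confSet_sdiff_finite hfin τ)) (Set.encard_ne_top_iff.1 htop)
    hC hD hne (SimpleGraph.ConnectedComponent.sound hreach)⟩

end Merging

/-! ### Finite energy -/

section CylinderExt

theorem measure_ext_of_cylinders {ι α : Type*} [Countable α] [MeasurableSpace α]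
    [MeasurableSingletonClass α] {μ ν : Measure (ι → α)} [IsFiniteMeasure μ]
    (h : ∀ I : Finset ι, ∃ J, I ⊆ J ∧
      ∀ σ : ι → α, μ {ω | ∀ i ∈ J, ω i = σ i} = ν {ω | ∀ i ∈ J, ω i = σ i}) :
    μ = ν := by
  have hJ {J : Finset ι}
      (hJ : ∀ σ : ι → α, μ {ω | ∀ i ∈ J, ω i = σ i} = ν {ω | ∀ i ∈ J, ω i = σ i}) :
      ν.map J.restrict = μ.map J.restrict := by
    refine Measure.ext_of_singleton fun x => ?_
    rw [Measure.map_apply (Finset.measurable_restrict J) (measurableSet_singleton x),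
      Measure.map_apply (Finset.measurable_restrict J) (measurableSet_singleton x)]
    obtain hempty | ⟨σ, rfl⟩ := (J.restrict (π := fun _ => α) ⁻¹' {x}).eq_empty_or_nonempty
    · simp only [hempty, measure_empty]
    · simpa [Set.preimage, funext_iff] using (hJ σ).symm
  refine IsProjectiveLimit.unique (P := fun I => μ.map I.restrict) (fun _ => rfl) fun I => ?_
  obtain ⟨J, hIJ, hσ⟩ := h I
  change ν.map (Finset.restrict₂ hIJ ∘ J.restrict) = μ.map (Finset.restrict₂ hIJ ∘ J.restrict)
  rw [← Measure.map_map (Finset.measurable_restrict₂ hIJ) (Finset.measurable_restrict J),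
    ← Measure.map_map (Finset.measurable_restrict₂ hIJ) (Finset.measurable_restrict J), hJ hσ]

end CylinderExt

section Neighborhoods

theorem mem_edgeNbhd_iff {F : Finset HexE} {e : HexE} :
    e ∈ edgeNbhd F ↔ ∃ v ∈ verts F, ∃ m, edgesAt v m = e := by
  simp only [← mem_endsFinset_iff, verts, endsFinset, edgeNbhd, Set.mem_ofPred_eq,
    Finset.mem_biUnion, Finset.mem_insert, Finset.mem_singleton]
  constructor
  · rintro ⟨e₀, he₀, h | h | h | h⟩
    exacts [⟨_, ⟨e₀, he₀, .inl rfl⟩, .inl h⟩, ⟨_, ⟨e₀, he₀, .inl rfl⟩, .inr h⟩,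
      ⟨_, ⟨e₀, he₀, .inr rfl⟩, .inl h⟩, ⟨_, ⟨e₀, he₀, .inr rfl⟩, .inr h⟩]
  · rintro ⟨v, ⟨e₀, he₀, rfl | rfl⟩, h⟩
    exacts [⟨e₀, he₀, h.elim .inl (.inr ∘ .inl)⟩, ⟨e₀, he₀, .inr (.inr h)⟩]

theorem edgeNbhd_finite (F : Finset HexE) : (edgeNbhd F).Finite :=
  ((verts F).finite_toSet.biUnion fun v _ => Set.finite_range (edgesAt v)).subset fun _ he => by
    obtain ⟨v, hv, hm⟩ := mem_edgeNbhd_iff.1 he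
    exact Set.mem_biUnion hv hm

theorem localConf_congr {G : Finset HexE} {σ τ : Config} (h : ∀ e ∉ G, σ e = τ e) {v : HexV}
    (hv : v ∉ verts G) : localConf σ v = localConf τ v :=
  funext fun m => h _ fun hm => hv (Finset.mem_biUnion.2 ⟨_, hm, mem_endsFinset_iff.2 ⟨m, rfl⟩⟩)

theorem cyl_eq_of_mem {S : Set HexE} {σ ω : Config} (h : ω ∈ cyl S σ) : cyl S ω = cyl S σ :=
  Set.ext fun _ => forall₂_congr fun e he => by rw [h e he]

theorem measurableSet_cyl (S : Set HexE) (σ : Config) : MeasurableSet (cyl S σ) := by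
  simp only [cyl, Set.ofPred_forall]
  exact .biInter S.to_countable fun e _ =>
    measurableSet_eq_fun (measurable_pi_apply e) measurable_const

theorem localConf_eq_of_mem_cyl {F : Finset HexE} {σ ω : Config} {v : HexV}
    (hω : ω ∈ cyl (↑F ∪ edgeNbhd F) σ) (hv : v ∈ verts F) : localConf ω v = localConf σ v :=
  funext fun m => hω _ (.inr (mem_edgeNbhd_iff.2 ⟨v, hv, m, rfl⟩))

theorem verts_mono {G F : Finset HexE} (hGF : G ⊆ F) : verts G ⊆ verts F :=
  Finset.biUnion_subset_biUnion_of_subset_left _ hGF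

end Neighborhoods

section LocalWeight

/-- The contribution of the vertices in `W` to the weight of a configuration. -/
noncomputable def localWeight (a b c : ℝ) (W : Finset HexV) (ω : Config) : ℝ≥0∞ :=
  ∏ v ∈ W, ENNReal.ofReal (weight a b c (localConf ω v))

theorem localWeight_congr {W : Finset HexV} {σ τ : Config}
    (h : ∀ v ∈ W, localConf σ v = localConf τ v) (a b c : ℝ) :
    localWeight a b c W σ = localWeight a b c W τ :=
  Finset.prod_congr rfl fun v hv => by rw [h v hv]

theorem measurable_localWeight (a b c : ℝ) (W : Finset HexV) :
    Measurable (localWeight a b c W) :=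
  Finset.measurable_prod W fun v _ => (Measurable.of_discrete (f := fun τ =>
    ENNReal.ofReal (weight a b c τ))).comp (measurable_localConf v)

theorem exists_localWeight_le (a b c : ℝ) (W : Finset HexV) :
    ∃ C : ℝ≥0, ∀ ω, localWeight a b c W ω ≤ C := by
  refine ⟨(∑ τ, (weight a b c τ).toNNReal) ^ W.card, fun ω => ?_⟩
  rw [ENNReal.coe_pow]
  refine Finset.prod_le_pow_card _ _ _ fun v _ => ENNReal.coe_le_coe.2 ?_
  exact Finset.single_le_sum (f := fun τ => (weight a b c τ).toNNReal) (fun _ _ => zero_le)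
    (Finset.mem_univ (localConf ω v))

theorem localWeight_ne_top (a b c : ℝ) (W : Finset HexV) (ω : Config) :
    localWeight a b c W ω ≠ ∞ :=
  ENNReal.prod_ne_top fun _ _ => ENNReal.ofReal_ne_top

variable {a b c : ℝ}

theorem weight_nonneg (ha : 0 ≤ a) (hb : 0 ≤ b) (hc : 0 ≤ c) (τ : Fin 3 → Bool) :
    0 ≤ weight a b c τ := by
  unfold weight
  split <;> first | assumption | rfl

theorem weight_pos_iff (ha : 0 < a) (hb : 0 < b) (hc : 0 < c) {τ : Fin 3 → Bool} :
    0 < weight a b c τ ↔ validConf τ := by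
  simp only [validConf, weight, ne_eq, funext_iff, Fin.forall_fin_succ]
  cases τ 0 <;> cases h₁ : τ 1 <;> cases h₂ : τ 2 <;> simp [*]

theorem localWeight_ne_zero_iff (ha : 0 < a) (hb : 0 < b) (hc : 0 < c) {W : Finset HexV}
    {ω : Config} : localWeight a b c W ω ≠ 0 ↔ ∀ v ∈ W, validConf (localConf ω v) := by
  simp only [localWeight, Finset.prod_ne_zero_iff, ENNReal.ofReal_ne_zero_iff,
    weight_pos_iff ha hb hc]

end LocalWeight

section FiniteEnergy

/-- Switches the state of every edge in `G`. -/
def flipEdges (G : Finset HexE) (ω : Config) : Config := fun e => ω e ^^ decide (e ∈ G)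

theorem flipEdges_involutive (G : Finset HexE) : Function.Involutive (flipEdges G) := fun ω => by
  funext e
  simp only [flipEdges, Bool.xor_assoc, Bool.xor_self, Bool.xor_false]

theorem flipEdges_apply_of_notMem {G : Finset HexE} {e : HexE} (he : e ∉ G) (ω : Config) :
    flipEdges G ω e = ω e := by
  simp only [flipEdges, he, decide_false, Bool.xor_false]

theorem flipEdges_toFinset_ne {σ ω : Config} (h : {e | σ e ≠ ω e}.Finite) :
    flipEdges h.toFinset ω = σ := by
  funext e
  simp only [flipEdges, Set.Finite.mem_toFinset, Set.mem_ofPred_eq]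
  cases σ e <;> cases ω e <;> rfl

theorem measurable_flipEdges (G : Finset HexE) : Measurable (flipEdges G) :=
  measurable_pi_lambda _ fun e =>
    (Measurable.of_discrete (f := (· ^^ decide (e ∈ G)))).comp (measurable_pi_apply e)

theorem flipEdges_preimage_cyl (G : Finset HexE) (S : Set HexE) (σ : Config) :
    flipEdges G ⁻¹' cyl S σ = cyl S (flipEdges G σ) :=
  Set.ext fun ω => forall₂_congr fun e _ => by
    simp only [flipEdges]
    cases ω e <;> cases σ e <;> simp

theorem localConf_flipEdges_congr {G : Finset HexE} {σ ω : Config} {v : HexV}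
    (h : localConf σ v = localConf ω v) :
    localConf (flipEdges G σ) v = localConf (flipEdges G ω) v :=
  funext fun m => congrArg (· ^^ decide (edgesAt v m ∈ G)) (congrFun h m)

theorem measurable_isConfig : Measurable IsConfig := by
  have heq : IsConfig = fun ω => ∀ v, validConf (localConf ω v) :=
    funext fun _ => propext isConfig_iff
  exact heq ▸ .forall fun v =>
    (Measurable.of_discrete (f := validConf)).comp (measurable_localConf v)

variable {a b c : ℝ} {μ : Measure Config} {G F : Finset HexE}

theorem IsGibbs.ae_isConfig (hμ : IsGibbs a b c μ) : ∀ᵐ ω ∂μ, IsConfig ω :=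
  have := hμ.1
  (mem_ae_iff_prob_eq_one (measurableSet_setOfPred.2 measurable_isConfig)).2 hμ.2.1

-- The vertices outside `verts G` contribute the same nonzero factor on both sides.
theorem IsGibbs.measure_cyl_mul_localWeight (ha : 0 < a) (hb : 0 < b) (hc : 0 < c)
    (hμ : IsGibbs a b c μ) (hGF : G ⊆ F) {σ τ : Config} (hσ : IsConfig σ) (hτ : IsConfig τ)
    (h : ∀ e ∉ G, σ e = τ e) :
    μ (cyl (↑F ∪ edgeNbhd F) σ) * localWeight a b c (verts G) τ =
      μ (cyl (↑F ∪ edgeNbhd F) τ) * localWeight a b c (verts G) σ := by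
  have hsplit (ω : Config) : ENNReal.ofReal (∏ v ∈ verts F, weight a b c (localConf ω v)) =
      localWeight a b c (verts F \ verts G) ω * localWeight a b c (verts G) ω := by
    rw [ENNReal.ofReal_prod_of_nonneg fun v _ => weight_nonneg ha.le hb.le hc.le _]
    exact (Finset.prod_sdiff (verts_mono hGF)).symm
  have hrest : localWeight a b c (verts F \ verts G) τ = localWeight a b c (verts F \ verts G) σ :=
    localWeight_congr (fun v hv => (localConf_congr h (Finset.mem_sdiff.1 hv).2).symm) a b c
  have hne : localWeight a b c (verts F \ verts G) σ ≠ 0 :=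
    (localWeight_ne_zero_iff ha hb hc).2 fun v _ => isConfig_iff.1 hσ v
  have hgibbs := hμ.2.2 F σ τ hσ hτ fun e he => h e fun heG => he (hGF heG)
  rwa [hsplit, hsplit, hrest, mul_left_comm, mul_left_comm (μ _),
    ENNReal.mul_right_inj hne (localWeight_ne_top _ _ _ _ _)] at hgibbs

theorem isConfig_flipEdges {ω : Config} (hω : IsConfig ω)
    (h : ∀ v ∈ verts G, validConf (localConf (flipEdges G ω) v)) : IsConfig (flipEdges G ω) := by
  refine isConfig_iff.2 fun v => ?_
  by_cases hv : v ∈ verts G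
  · exact h v hv
  · rw [localConf_congr (fun e he => flipEdges_apply_of_notMem he ω) hv]
    exact isConfig_iff.1 hω v

theorem IsGibbs.measure_cyl_mul_localWeight_flipEdges_of_ne_zero
    (ha : 0 < a) (hb : 0 < b) (hc : 0 < c) (hμ : IsGibbs a b c μ) (hGF : G ⊆ F) {σ : Config}
    (hne : μ (cyl (↑F ∪ edgeNbhd F) σ) * localWeight a b c (verts G) (flipEdges G σ) ≠ 0) :
    μ (cyl (↑F ∪ edgeNbhd F) σ) * localWeight a b c (verts G) (flipEdges G σ) =
      μ (cyl (↑F ∪ edgeNbhd F) (flipEdges G σ)) * localWeight a b c (verts G) σ := by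
  obtain ⟨hcyl, hweight⟩ := mul_ne_zero_iff.1 hne
  obtain ⟨ω, hωσ, hω⟩ :=
    ((frequently_ae_mem_iff.2 hcyl).and_eventually hμ.ae_isConfig).exists
  have hconf (v) (hv : v ∈ verts G) : localConf ω v = localConf σ v :=
    localConf_eq_of_mem_cyl hωσ (verts_mono hGF hv)
  have hconf' (v) (hv : v ∈ verts G) : localConf (flipEdges G ω) v = localConf (flipEdges G σ) v :=
    localConf_flipEdges_congr (hconf v hv)
  have hω' : IsConfig (flipEdges G ω) := isConfig_flipEdges hω fun v hv =>
    hconf' v hv ▸ (localWeight_ne_zero_iff ha hb hc).1 hweight v hv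
  rw [← flipEdges_preimage_cyl, ← cyl_eq_of_mem hωσ, flipEdges_preimage_cyl,
    ← localWeight_congr hconf, ← localWeight_congr hconf']
  exact hμ.measure_cyl_mul_localWeight ha hb hc hGF hω hω'
    fun e he => (flipEdges_apply_of_notMem he ω).symm

theorem IsGibbs.measure_cyl_mul_localWeight_flipEdges
    (ha : 0 < a) (hb : 0 < b) (hc : 0 < c) (hμ : IsGibbs a b c μ) (hGF : G ⊆ F) (σ : Config) :
    μ (cyl (↑F ∪ edgeNbhd F) σ) * localWeight a b c (verts G) (flipEdges G σ) =
      μ (cyl (↑F ∪ edgeNbhd F) (flipEdges G σ)) * localWeight a b c (verts G) σ := by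
  by_cases hne : μ (cyl (↑F ∪ edgeNbhd F) σ) * localWeight a b c (verts G) (flipEdges G σ) = 0
  · by_contra h
    have hflip := hμ.measure_cyl_mul_localWeight_flipEdges_of_ne_zero ha hb hc hGF
      (σ := flipEdges G σ)
    rw [flipEdges_involutive G σ] at hflip
    exact h (hflip fun h0 => h (hne.trans h0.symm)).symm
  · exact hμ.measure_cyl_mul_localWeight_flipEdges_of_ne_zero ha hb hc hGF hne

theorem withDensity_localWeight_flipEdges_cyl (a b c : ℝ) (μ : Measure Config) (hGF : G ⊆ F)
    (σ : Config) :
    μ.withDensity (localWeight a b c (verts G) ∘ flipEdges G) (cyl (↑F ∪ edgeNbhd F) σ) =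
      μ (cyl (↑F ∪ edgeNbhd F) σ) * localWeight a b c (verts G) (flipEdges G σ) := by
  have hconst (ω) (hω : ω ∈ cyl (↑F ∪ edgeNbhd F) σ) :
      (localWeight a b c (verts G) ∘ flipEdges G) ω =
        localWeight a b c (verts G) (flipEdges G σ) :=
    localWeight_congr (fun v hv => localConf_flipEdges_congr
      (localConf_eq_of_mem_cyl hω (verts_mono hGF hv))) a b c
  rw [withDensity_apply _ (measurableSet_cyl _ σ),
    setLIntegral_congr_fun (measurableSet_cyl _ σ) hconst, setLIntegral_const, mul_comm]

-- The density is the weight that the switched configuration has near `G`: by the Gibbs property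
-- this makes both sides of every switch equally likely.
theorem IsGibbs.map_flipEdges_withDensity (ha : 0 < a) (hb : 0 < b) (hc : 0 < c)
    (hμ : IsGibbs a b c μ) (G : Finset HexE) :
    (μ.withDensity (localWeight a b c (verts G) ∘ flipEdges G)).map (flipEdges G) =
      μ.withDensity (localWeight a b c (verts G) ∘ flipEdges G) := by
  have := hμ.1
  obtain ⟨C, hC⟩ := exists_localWeight_le a b c (verts G)
  have : IsFiniteMeasure (μ.withDensity (localWeight a b c (verts G) ∘ flipEdges G)) :=
    isFiniteMeasure_withDensity
      (IsFiniteMeasure.lintegral_lt_top_of_bounded_to_ennreal μ ⟨C, fun ω => hC _⟩).ne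
  symm
  refine measure_ext_of_cylinders fun I => ?_
  have hfin : (↑(G ∪ I) ∪ edgeNbhd (G ∪ I)).Finite :=
    (G ∪ I).finite_toSet.union (edgeNbhd_finite _)
  refine ⟨hfin.toFinset, fun e he => by simp [he], fun σ => ?_⟩
  have hcyl : {ω | ∀ e ∈ hfin.toFinset, ω e = σ e} = cyl (↑(G ∪ I) ∪ edgeNbhd (G ∪ I)) σ := by
    simp only [Set.Finite.mem_toFinset, cyl]
  have hGI : G ⊆ G ∪ I := Finset.subset_union_left
  rw [hcyl, Measure.map_apply (measurable_flipEdges G) (measurableSet_cyl _ σ),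
    flipEdges_preimage_cyl, withDensity_localWeight_flipEdges_cyl a b c μ hGI,
    withDensity_localWeight_flipEdges_cyl a b c μ hGI, flipEdges_involutive G σ]
  exact hμ.measure_cyl_mul_localWeight_flipEdges ha hb hc hGI σ

theorem IsGibbs.ae_flipEdges (ha : 0 < a) (hb : 0 < b) (hc : 0 < c) (hμ : IsGibbs a b c μ)
    (G : Finset HexE) {p : Config → Prop} (hp : ∀ᵐ ω ∂μ, p ω) :
    ∀ᵐ ω ∂μ, IsConfig (flipEdges G ω) → p (flipEdges G ω) := by
  have hmeas : Measurable (localWeight a b c (verts G) ∘ flipEdges G) :=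
    (measurable_localWeight a b c (verts G)).comp (measurable_flipEdges G)
  have hmap := (withDensity_absolutelyContinuous μ
    (localWeight a b c (verts G) ∘ flipEdges G)).ae_le hp
  rw [← hμ.map_flipEdges_withDensity ha hb hc] at hmap
  have hflip := ae_of_ae_map (measurable_flipEdges G).aemeasurable hmap
  filter_upwards [(ae_withDensity_iff hmeas).1 hflip] with ω hω hconfig
  exact hω ((localWeight_ne_zero_iff ha hb hc).2 fun v _ => isConfig_iff.1 hconfig v)

theorem IsGibbs.ae_forall_finite_change (ha : 0 < a) (hb : 0 < b) (hc : 0 < c)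
    (hμ : IsGibbs a b c μ) {p : Config → Prop} (hp : ∀ᵐ ω ∂μ, p ω) :
    ∀ᵐ ω ∂μ, ∀ ω', IsConfig ω' → {e | ω' e ≠ ω e}.Finite → p ω' := by
  filter_upwards [ae_all_iff.2 fun G => hμ.ae_flipEdges ha hb hc G hp] with ω hω ω' hω' hfin
  have hflip := hω hfin.toFinset
  rw [flipEdges_toFinset_ne] at hflip
  exact hflip hω'

end FiniteEnergy

theorem no_finite_number_of_infinite_homogeneous_clusters_general
    (a b c : ℝ) (ha : 0 < a) (hb : 0 < b) (hc : 0 < c)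
    (μ : Measure Config) (hGibbs : IsGibbs a b c μ) (hErg : IsErgodicTI μ)
    (τ₀ : Fin 3 → Bool) (hτ₀ : validConf τ₀) (k : ℕ) (hk : 1 < k) :
    μ {ω : Config | numInfClusters ω τ₀ = (k : ℕ∞)} = 0 := by
  have := hGibbs.1
  have hmeas : MeasurableSet {ω : Config | numInfClusters ω τ₀ = (k : ℕ∞)} :=
    measurable_numInfClusters τ₀ (measurableSet_singleton _)
  have hinv (g) : shiftConfig g ⁻¹' {ω | numInfClusters ω τ₀ = (k : ℕ∞)} =
      {ω | numInfClusters ω τ₀ = (k : ℕ∞)} :=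
    Set.ext fun ω => by simp only [Set.mem_preimage, Set.mem_ofPred_eq, numInfClusters_shiftConfig]
  refine (hErg _ hmeas hinv).resolve_right fun hone => ?_
  have hae : ∀ᵐ ω ∂μ, numInfClusters ω τ₀ = k := (mem_ae_iff_prob_eq_one hmeas).2 hone
  obtain ⟨ω, hω, hcount, hchange⟩ := (hGibbs.ae_isConfig.and
    (hae.and (hGibbs.ae_forall_finite_change ha hb hc hae))).exists
  obtain ⟨ω', hω', hfin, hlt⟩ := exists_isConfig_numInfClusters_lt hτ₀ hω
    (hcount ▸ Nat.one_lt_cast.2 hk) (hcount ▸ ENat.natCast_ne_top k)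
  exact hlt.ne ((hchange ω' hω' hfin).trans hcount.symm)

/-- For an ergodic translation-invariant Gibbs measure and any of the six local
configuration types `τ₀`, the number of infinite `τ₀`-clusters is almost surely not equal to
any finite `k > 1`. -/
theorem no_finite_number_of_infinite_homogeneous_clusters
    (a b c : ℝ) (ha : 0 < a) (hb : 0 < b) (hc : 0 < c)
    (μ : Measure Config) (hGibbs : IsGibbs a b c μ) (hTI : TransInvariant μ)
    (hErg : IsErgodicTI μ) (τ₀ : Fin 3 → Bool) (hτ₀ : validConf τ₀)
    (k : ℕ) (hk : 1 < k) :
    μ {ω : Config | numInfClusters ω τ₀ = (k : ℕ∞)} = 0 :=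
  no_finite_number_of_infinite_homogeneous_clusters_general a b c ha hb hc μ hGibbs hErg τ₀ hτ₀ k hk
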